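/- The contextual fraction is monotone under non-contextual measurement-wise post-processing: if B' is obtained from a behavior B on a compatibility scenario Υ by a non-contextual measurement-wise post-processing, then CF(B') ≤ CF(B). -/

import Mathlib

/-!
Post-processing is affine in the behavior, sends behaviors to behaviors, and sends non-contextual
behaviors to non-contextual ones. Hence it carries every decomposition `p = l p' + (1-l) pnc` to a
decomposition of `postProc μ q p` with the same weight `l`, so the set of admissible weights can
only grow and its infimum can only drop.

The step with content is preservation of non-contextuality. Applying the channels `q x φ` at all
measurements at once turns a global section `d` into the distribution `globalPostProc μ q d` on
`O^M`. Its marginal on `γ` is the post-processing of the marginal of `d`, because the channels at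
measurements outside `γ` sum to one (`sum_ite_restrict_prod`).
-/

open Finset

/-- A family assigning to each context `γ` a real-valued function on joint
outcome assignments `↥γ → O`. Behaviors are such families. -/
abbrev Fam (M O : Type) : Type := (γ : Finset M) → (↥γ → O) → ℝ

variable {M O : Type} [Fintype M] [DecidableEq M] [Fintype O] [DecidableEq O]

/-- `p` is a behavior for the scenario with contexts `C`: on every context it is a
probability distribution on joint outcomes. -/
def IsBehavior (C : Finset (Finset M)) (p : Fam M O) : Prop :=
  ∀ γ ∈ C, (∀ s, 0 ≤ p γ s) ∧ ∑ s, p γ s = 1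

/-- Marginal of a global distribution `d` on `O^M` on the context `γ`. -/
def marg (γ : Finset M) (d : (M → O) → ℝ) (s : ↥γ → O) : ℝ :=
  ∑ f : M → O, if (fun x : ↥γ => f x.1) = s then d f else 0

/-- A behavior is non-contextual when it admits a global section: a probability
distribution on `O^M` marginalizing to `p γ` on every context `γ ∈ C`. -/
def NonContextual (C : Finset (Finset M)) (p : Fam M O) : Prop :=
  ∃ d : (M → O) → ℝ, (∀ f, 0 ≤ d f) ∧ (∑ f, d f = 1) ∧
    ∀ γ ∈ C, ∀ s, p γ s = marg γ d s

/-- The contextual fraction: the infimum of `l ∈ [0,1]` such that the behavior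
decomposes as `l B' + (1-l) B^NC` with `B'` a behavior and `B^NC` non-contextual. -/
noncomputable def CF (C : Finset (Finset M)) (p : Fam M O) : ℝ :=
  sInf {l : ℝ | 0 ≤ l ∧ l ≤ 1 ∧
    ∃ p' pnc : Fam M O, IsBehavior C p' ∧ IsBehavior C pnc ∧ NonContextual C pnc ∧
      ∀ γ ∈ C, ∀ s, p γ s = l * p' γ s + (1 - l) * pnc γ s}

/-- Non-contextual measurement-wise post-processing of a behavior: shared randomness
`μ` on `Φ` and stochastic matrices `q x φ` with `q x φ t s = q_x^φ(t|s)`, giving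
`p' γ t = ∑ φ, μ φ ∑ s (∏_{x ∈ γ} q_x^φ(t x | s x)) p γ s`. -/
noncomputable def postProc {Φ : Type} [Fintype Φ] (μ : Φ → ℝ) (q : M → Φ → O → O → ℝ)
    (p : Fam M O) : Fam M O :=
  fun γ t => ∑ φ, μ φ * ∑ s : ↥γ → O, (∏ x : ↥γ, q x.1 φ (t x) (s x)) * p γ s

/-- The post-processing channels applied at all measurements to a weight `d` on `O^M`. -/
noncomputable def globalPostProc {Φ : Type} [Fintype Φ] (μ : Φ → ℝ) (q : M → Φ → O → O → ℝ)
    (d : (M → O) → ℝ) (g : M → O) : ℝ :=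
  ∑ φ, μ φ * ∑ f : M → O, (∏ x, q x φ (g x) (f x)) * d f

/-- The marginal on `γ` of a product of normalized weights is the product over `γ`. -/
lemma sum_ite_restrict_prod (γ : Finset M) (a : M → O → ℝ) (ha : ∀ x, ∑ o, a x o = 1)
    (t : ↥γ → O) :
    (∑ g : M → O, if (fun x : ↥γ => g x.1) = t then ∏ x, a x (g x) else 0)
      = ∏ x : ↥γ, a x.1 (t x) := by
  -- Put the restriction to `g|γ = t` into the factors; the sum over `g` then factorizes.
  let b : M → O → ℝ := fun x o =>
    if ∀ h : x ∈ γ, o = t ⟨x, h⟩ then a x o else 0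
  have h1 : ∀ g : M → O, (if (fun x : ↥γ => g x.1) = t then ∏ x, a x (g x) else 0)
      = ∏ x, b x (g x) := by
    intro g
    split_ifs with h
    · refine Finset.prod_congr rfl fun x _ => ?_
      have hx : ∀ h : x ∈ γ, g x = t ⟨x, h⟩ := fun hx => congrFun h ⟨x, hx⟩
      simp only [b, if_pos hx]
    · obtain ⟨x, hx⟩ := Function.ne_iff.mp h
      symm
      refine Finset.prod_eq_zero (Finset.mem_univ x.1) ?_
      exact if_neg fun h' => hx (h' x.2)
  have h2 : ∀ x ∉ γ, ∑ o, b x o = 1 := by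
    intro x hx
    simp [b, hx, ha]
  have h3 : ∀ x : ↥γ, ∑ o, b x.1 o = a x.1 (t x) := by
    intro x
    simp [b, x.2]
  rw [Finset.sum_congr rfl fun g _ => h1 g, ← Fintype.prod_sum,
    ← Finset.prod_subset (Finset.subset_univ γ) fun x _ hx => h2 x hx,
    ← Finset.prod_coe_sort γ]
  exact Finset.prod_congr rfl fun x _ => h3 x

/-- Averaging over `μ` a product of stochastic channels preserves total mass. -/
lemma sum_channel {ι Φ : Type} [Fintype ι] [DecidableEq ι] [Fintype Φ] (μ : Φ → ℝ)
    (hμ1 : ∑ φ, μ φ = 1) (k : ι → Φ → O → O → ℝ) (hk : ∀ x φ s, ∑ t, k x φ t s = 1)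
    (w : (ι → O) → ℝ) :
    ∑ t : ι → O, ∑ φ, μ φ * ∑ s : ι → O, (∏ x, k x φ (t x) (s x)) * w s = ∑ s, w s := by
  rw [Finset.sum_comm]
  have h : ∀ φ, ∑ t : ι → O, μ φ * ∑ s : ι → O, (∏ x, k x φ (t x) (s x)) * w s
      = μ φ * ∑ s, w s := by
    intro φ
    rw [← Finset.mul_sum, Finset.sum_comm]
    congr 1
    refine Finset.sum_congr rfl fun s _ => ?_
    rw [← Finset.sum_mul, ← Fintype.prod_sum (fun x o => k x φ o (s x))]
    simp [hk]
  rw [Finset.sum_congr rfl fun φ _ => h φ, ← Finset.sum_mul, hμ1, one_mul]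

lemma isBehavior_postProc {Φ : Type} [Fintype Φ] (μ : Φ → ℝ) (hμ0 : ∀ φ, 0 ≤ μ φ)
    (hμ1 : ∑ φ, μ φ = 1) (q : M → Φ → O → O → ℝ) (hq0 : ∀ x φ t s, 0 ≤ q x φ t s)
    (hq1 : ∀ x φ s, ∑ t, q x φ t s = 1) (C : Finset (Finset M)) (p : Fam M O)
    (hp : IsBehavior C p) : IsBehavior C (postProc μ q p) := by
  intro γ hγ
  refine ⟨fun t => ?_, ?_⟩
  · exact Finset.sum_nonneg fun φ _ => mul_nonneg (hμ0 φ) <| Finset.sum_nonneg fun s _ =>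
      mul_nonneg (Finset.prod_nonneg fun x _ => hq0 _ _ _ _) ((hp γ hγ).1 s)
  · exact (sum_channel μ hμ1 (fun x : ↥γ => q x.1) (fun x => hq1 x.1) (p γ)).trans (hp γ hγ).2

lemma sum_mul_marg (γ : Finset M) (d : (M → O) → ℝ) (k : (↥γ → O) → ℝ) :
    ∑ s, k s * marg γ d s = ∑ f : M → O, k (fun x => f x.1) * d f := by
  simp only [marg, Finset.mul_sum]
  rw [Finset.sum_comm]
  simp

lemma marg_globalPostProc {Φ : Type} [Fintype Φ] (μ : Φ → ℝ) (q : M → Φ → O → O → ℝ)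
    (hq1 : ∀ x φ s, ∑ t, q x φ t s = 1) (γ : Finset M) (d : (M → O) → ℝ) (t : ↥γ → O) :
    marg γ (globalPostProc μ q d) t
      = ∑ φ, μ φ * ∑ s : ↥γ → O, (∏ x : ↥γ, q x.1 φ (t x) (s x)) * marg γ d s := by
  have h : ∀ φ, ∑ s : ↥γ → O, (∏ x : ↥γ, q x.1 φ (t x) (s x)) * marg γ d s
      = ∑ g : M → O, if (fun x : ↥γ => g x.1) = t then
          ∑ f : M → O, (∏ x, q x φ (g x) (f x)) * d f else 0 := by
    intro φ
    rw [sum_mul_marg γ d fun s => ∏ x : ↥γ, q x.1 φ (t x) (s x)]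
    simp only [← Finset.sum_filter]
    rw [Finset.sum_comm]
    refine Finset.sum_congr rfl fun f _ => ?_
    rw [← Finset.sum_mul, Finset.sum_filter,
      sum_ite_restrict_prod γ (fun x o => q x φ o (f x)) fun x => hq1 x φ (f x)]
  simp only [h]
  simp only [marg, globalPostProc, ← Finset.sum_filter, Finset.mul_sum]
  rw [Finset.sum_comm]

lemma nonContextual_postProc {Φ : Type} [Fintype Φ] (μ : Φ → ℝ) (hμ0 : ∀ φ, 0 ≤ μ φ)
    (hμ1 : ∑ φ, μ φ = 1) (q : M → Φ → O → O → ℝ) (hq0 : ∀ x φ t s, 0 ≤ q x φ t s)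
    (hq1 : ∀ x φ s, ∑ t, q x φ t s = 1) (C : Finset (Finset M)) (p : Fam M O)
    (hp : NonContextual C p) : NonContextual C (postProc μ q p) := by
  obtain ⟨d, hd0, hd1, hd⟩ := hp
  refine ⟨globalPostProc μ q d, fun g => ?_, (sum_channel μ hμ1 q hq1 d).trans hd1,
    fun γ hγ t => ?_⟩
  · exact Finset.sum_nonneg fun φ _ => mul_nonneg (hμ0 φ) <| Finset.sum_nonneg fun f _ =>
      mul_nonneg (Finset.prod_nonneg fun x _ => hq0 _ _ _ _) (hd0 f)
  · rw [marg_globalPostProc μ q hq1]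
    simp only [postProc, hd γ hγ]

lemma postProc_mix {Φ : Type} [Fintype Φ] (μ : Φ → ℝ) (q : M → Φ → O → O → ℝ)
    (p p₁ p₂ : Fam M O) (a b : ℝ) (γ : Finset M)
    (h : ∀ s, p γ s = a * p₁ γ s + b * p₂ γ s) (t : ↥γ → O) :
    postProc μ q p γ t = a * postProc μ q p₁ γ t + b * postProc μ q p₂ γ t := by
  simp only [postProc, h, Finset.mul_sum, ← Finset.sum_add_distrib]
  refine Finset.sum_congr rfl fun φ _ => Finset.sum_congr rfl fun s _ => ?_
  ring

/-- The marginals of a point mass at a global assignment. -/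
lemma exists_nonContextual (C : Finset (Finset M)) (f : M → O) :
    ∃ p : Fam M O, IsBehavior C p ∧ NonContextual C p := by
  refine ⟨fun γ => marg γ (Pi.single f 1), fun γ _ => ⟨fun s => ?_, ?_⟩,
    Pi.single f 1, fun g => ?_, by simp, fun _ _ _ => rfl⟩
  · refine Finset.sum_nonneg fun g _ => ?_
    by_cases h : g = f <;> simp [h]
    split_ifs <;> norm_num
  · simpa using sum_mul_marg γ (Pi.single f (1 : ℝ)) fun _ => 1
  · by_cases h : g = f <;> simp [h]

/-- The contextual fraction is monotone under non-contextual measurement-wise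
post-processing. -/
theorem cf_monotone_postProc
    {Φ : Type} [Fintype Φ] (μ : Φ → ℝ) (hμ0 : ∀ φ, 0 ≤ μ φ) (hμ1 : ∑ φ, μ φ = 1)
    (q : M → Φ → O → O → ℝ) (hq0 : ∀ x φ t s, 0 ≤ q x φ t s)
    (hq1 : ∀ x φ s, ∑ t, q x φ t s = 1)
    (C : Finset (Finset M)) (p : Fam M O) (hp : IsBehavior C p) :
    CF C (postProc μ q p) ≤ CF C p := by
  rcases isEmpty_or_nonempty (M → O) with hE | ⟨⟨f⟩⟩
  · -- Without global assignments nothing is non-contextual: both infima are `sInf ∅ = 0`.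
    have h0 : ∀ p : Fam M O, CF C p = 0 := by
      intro p
      rw [CF, ← Real.sInf_empty]
      congr 1
      refine Set.eq_empty_iff_forall_notMem.mpr ?_
      rintro l ⟨-, -, p', pnc, -, -, ⟨d, -, hd, -⟩, -⟩
      simp at hd
    rw [h0, h0]
  · refine csInf_le_csInf ⟨0, fun l hl => hl.1⟩ ?_ ?_
    · obtain ⟨pnc, h1, h2⟩ := exists_nonContextual C f
      exact ⟨1, zero_le_one, le_rfl, p, pnc, hp, h1, h2, fun γ _ s => by ring⟩
    · rintro l ⟨hl0, hl1, p', pnc, hp', hpnc, hnc, h⟩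
      exact ⟨hl0, hl1, postProc μ q p', postProc μ q pnc,
        isBehavior_postProc μ hμ0 hμ1 q hq0 hq1 C p' hp',
        isBehavior_postProc μ hμ0 hμ1 q hq0 hq1 C pnc hpnc,
        nonContextual_postProc μ hμ0 hμ1 q hq0 hq1 C pnc hnc,
        fun γ hγ => postProc_mix μ q p p' pnc l (1 - l) γ (h γ hγ)⟩
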